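/- Let R be an algebraic curvature operator on ℝ⁴ whose self-dual Weyl part vanishes (W₊ = 0, i.e. P₊(Rη) = (scal(R)/12)·η for all η ∈ Λ²₊) and whose scalar curvature is positive, scal(R) > 0. Then R is PIC₊. -/

import Mathlib

noncomputable section

open scoped ComplexConjugate

/-- `ℝ⁴` with its standard basis. -/
abbrev V4 := Fin 4 → ℝ
/-- `Λ²ℝ⁴` in the coordinates given by the basis
`e₁∧e₂, e₁∧e₃, e₁∧e₄, e₂∧e₃, e₂∧e₄, e₃∧e₄` (0-indexed). -/
abbrev L6 := Fin 6 → ℝ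
/-- Endomorphisms of `Λ²ℝ⁴`, as `6×6` matrices. -/
abbrev M6 := Fin 6 → Fin 6 → ℝ

/-- standard basis of ℝ⁴ -/
def std4 (i : Fin 4) : V4 := fun j => if j = i then 1 else 0

/-- the standard inner product of ℝ⁴ -/
def ip4 (x y : V4) : ℝ := ∑ i, x i * y i

/-- the index pairs for the basis of Λ²ℝ⁴ -/
def pr : Fin 6 → Fin 4 × Fin 4 := ![(0,1),(0,2),(0,3),(1,2),(1,3),(2,3)]

/-- the wedge product `x ∧ y` of two vectors, in coordinates.  With this
coordinate expression, the standard inner product `ip6` below satisfies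
`⟨x∧y, z∧t⟩ = ⟨x,z⟩⟨y,t⟩ − ⟨x,t⟩⟨y,z⟩`. -/
def wedge (x y : V4) : L6 := fun k => x (pr k).1 * y (pr k).2 - x (pr k).2 * y (pr k).1

/-- the inner product of Λ²ℝ⁴ -/
def ip6 (a b : L6) : ℝ := ∑ k, a k * b k

/-- The Hodge star operator on Λ²ℝ⁴. -/
def hodge (w : L6) : L6 := ![w 5, -(w 4), w 3, w 2, -(w 1), w 0]

/-- self-dual 2-forms (the +1 eigenspace Λ²₊ of the Hodge star) -/
def SelfDual (w : L6) : Prop := hodge w = w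
/-- anti-self-dual 2-forms (the −1 eigenspace Λ²₋ of the Hodge star) -/
def AntiSelfDual (w : L6) : Prop := hodge w = -w

/-- application of an endomorphism (matrix) of Λ²ℝ⁴ to a 2-form -/
def appM (A : M6) (w : L6) : L6 := fun k => ∑ l, A k l * w l

/-- symmetry of an endomorphism of Λ²ℝ⁴ w.r.t. the inner product -/
def IsSymm6 (A : M6) : Prop := ∀ a b : L6, ip6 (appM A a) b = ip6 a (appM A b)

/-- the first Bianchi identity -/
def Bianchi (A : M6) : Prop := ∀ x y z t : V4,
  ip6 (appM A (wedge x y)) (wedge z t) + ip6 (appM A (wedge z x)) (wedge y t)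
    + ip6 (appM A (wedge y z)) (wedge x t) = 0

/-- algebraic curvature operators on ℝ⁴ : symmetric endomorphisms of Λ²ℝ⁴
satisfying the first Bianchi identity.  The set of these is `S²_BΛ²ℝ⁴`. -/
def IsCurvOp (A : M6) : Prop := IsSymm6 A ∧ Bianchi A

/-- the scalar curvature: twice the trace -/
def scal (A : M6) : ℝ := 2 * ∑ k, A k k

/-- orthogonal projection P₊ of Λ²ℝ⁴ onto Λ²₊ -/
def pplus (w : L6) : L6 := (1/2 : ℝ) • (w + hodge w)

/-- the self-dual Weyl part W₊ of a curvature operator, as a map on Λ²₊: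
`W₊η = P₊(Rη) − (scal(R)/12)·η`. -/
def Wplus (A : M6) (η : L6) : L6 := pplus (appM A η) - (scal A / 12) • η

/-- `R` is PIC₊ : the quadratic form `η ↦ ⟨Rη,η⟩` on Λ²₊ is 2-positive. -/
def PICp (A : M6) : Prop := ∀ η ζ : L6, SelfDual η → SelfDual ζ →
  ip6 η η = 1 → ip6 ζ ζ = 1 → ip6 η ζ = 0 →
  0 < ip6 (appM A η) η + ip6 (appM A ζ) ζ

/-- `R` is NNIC₊ : the quadratic form `η ↦ ⟨Rη,η⟩` on Λ²₊ is 2-nonnegative. -/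
def NNICp (A : M6) : Prop := ∀ η ζ : L6, SelfDual η → SelfDual ζ →
  ip6 η η = 1 → ip6 ζ ζ = 1 → ip6 η ζ = 0 →
  0 ≤ ip6 (appM A η) η + ip6 (appM A ζ) ζ

/-- `R` is PIC₋ : the quadratic form `η ↦ ⟨Rη,η⟩` on Λ²₋ is 2-positive. -/
def PICm (A : M6) : Prop := ∀ η ζ : L6, AntiSelfDual η → AntiSelfDual ζ →
  ip6 η η = 1 → ip6 ζ ζ = 1 → ip6 η ζ = 0 →
  0 < ip6 (appM A η) η + ip6 (appM A ζ) ζ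

/-- `R` is NNIC₋ : the quadratic form `η ↦ ⟨Rη,η⟩` on Λ²₋ is 2-nonnegative. -/
def NNICm (A : M6) : Prop := ∀ η ζ : L6, AntiSelfDual η → AntiSelfDual ζ →
  ip6 η η = 1 → ip6 ζ ζ = 1 → ip6 η ζ = 0 →
  0 ≤ ip6 (appM A η) η + ip6 (appM A ζ) ζ

/- ### complexifications -/

/-- `ℂ⁴` -/
abbrev VC4 := Fin 4 → ℂ
/-- `Λ²ℂ⁴` -/
abbrev LC6 := Fin 6 → ℂ

/-- the wedge product on ℂ⁴ -/
def wedgeC (x y : VC4) : LC6 := fun k => x (pr k).1 * y (pr k).2 - x (pr k).2 * y (pr k).1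

/-- the complex-bilinear extension of the inner product of ℝ⁴ -/
def bilC4 (x y : VC4) : ℂ := ∑ i, x i * y i

/-- the complex-bilinear extension of the inner product of Λ²ℝ⁴ -/
def bilC6 (a b : LC6) : ℂ := ∑ k, a k * b k

/-- the Hermitian inner product `⟨·,·⟩_h` on Λ²ℂ⁴ associated to the real inner
product on Λ²ℝ⁴ -/
def hermC6 (a b : LC6) : ℂ := ∑ k, a k * conj (b k)

/-- the complex-linear extension of an endomorphism of Λ²ℝ⁴ to Λ²ℂ⁴ -/
def appMC (A : M6) (w : LC6) : LC6 := fun k => ∑ l, (A k l : ℂ) * w l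

/-- the complex-linear extension of the Hodge star -/
def hodgeC (w : LC6) : LC6 := ![w 5, -(w 4), w 3, w 2, -(w 1), w 0]

/-- membership in `Λ²₊ ⊗ ℂ` -/
def SelfDualC (w : LC6) : Prop := hodgeC w = w

lemma ip6_eq_dotProduct (v w : L6) : ip6 v w = v ⬝ᵥ w := rfl

lemma ip6_smul_left (c : ℝ) (v w : L6) : ip6 (c • v) w = c * ip6 v w := by
  rw [ip6_eq_dotProduct, ip6_eq_dotProduct, smul_dotProduct, smul_eq_mul]

lemma ip6_hodge_left (v w : L6) : ip6 (hodge v) w = ip6 v (hodge w) := by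
  simp only [ip6, hodge, Fin.sum_univ_six, Matrix.cons_val]
  ring

lemma ip6_pplus_left (v w : L6) : ip6 (pplus v) w = ip6 v (pplus w) := by
  have hodge_symm : hodge v ⬝ᵥ w = v ⬝ᵥ hodge w := ip6_hodge_left v w
  simp only [ip6_eq_dotProduct, pplus, smul_dotProduct, dotProduct_smul, add_dotProduct,
    dotProduct_add, hodge_symm]

lemma SelfDual.pplus_eq {w : L6} (hw : SelfDual w) : pplus w = w := by
  have hodge_eq : hodge w = w := hw
  rw [pplus, hodge_eq, ← two_smul ℝ w, smul_smul]
  norm_num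

lemma SelfDual.ip6_eq_ip6_pplus {w : L6} (hw : SelfDual w) (v : L6) :
    ip6 v w = ip6 (pplus v) w := by
  rw [ip6_pplus_left, hw.pplus_eq]

lemma SelfDual.ip6_eq_mul_of_pplus_eq_smul {c : ℝ} {v w : L6} (hw : SelfDual w)
    (hv : pplus v = c • w) : ip6 v w = c * ip6 w w := by
  rw [hw.ip6_eq_ip6_pplus, hv, ip6_smul_left]

theorem picPlus_of_weylPlus_eq_zero_of_scal_pos_general {A : M6} {c : ℝ} (hc : 0 < c)
    (hW : ∀ η : L6, SelfDual η → pplus (appM A η) = c • η) : PICp A := by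
  intro η ζ hη hζ hη_unit hζ_unit _
  have value_of_unit {ω : L6} (hω : SelfDual ω) (hω_unit : ip6 ω ω = 1) :
      ip6 (appM A ω) ω = c := by
    rw [hω.ip6_eq_mul_of_pplus_eq_smul (hW ω hω), hω_unit, mul_one]
  rw [value_of_unit hη hη_unit, value_of_unit hζ hζ_unit]
  exact add_pos hc hc

/-- an algebraic curvature operator with vanishing self-dual
Weyl part and positive scalar curvature is PIC₊. -/
theorem picPlus_of_weylPlus_eq_zero_of_scal_pos (A : M6) (hA : IsCurvOp A)
    (hW : ∀ η : L6, SelfDual η → pplus (appM A η) = (scal A / 12) • η)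
    (hscal : 0 < scal A) :
    PICp A := by
  exact picPlus_of_weylPlus_eq_zero_of_scal_pos_general (by positivity) hW
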